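/- Let X be a reflexive real Banach space. Then X has the Mazur Intersection Property (every norm-closed, bounded, convex set in X is the intersection of all closed balls containing it) if and only if every nonempty norm-closed, bounded, convex set in X is the norm-closed convex hull of its set of farthest points. -/

import Mathlib

open Metric Set Pointwise

/-- The farthest distance map `r_K(x) = sup {‖z - x‖ : z ∈ K}`. -/
noncomputable def rFar {X : Type*} [NormedAddCommGroup X] (K : Set X) (x : X) : ℝ :=
  sSup ((fun z => ‖z - x‖) '' K)

/-- `Q_K(x)`: the set of points of `K` farthest from `x`. -/
def QFar {X : Type*} [NormedAddCommGroup X] (K : Set X) (x : X) : Set X :=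
  {z ∈ K | ‖z - x‖ = rFar K x}

/-- `D(K)`: the set of points admitting a farthest point in `K`. -/
def DFar {X : Type*} [NormedAddCommGroup X] (K : Set X) : Set X :=
  {x | (QFar K x).Nonempty}

/-- `b(K)`: the set of farthest points of `K`. -/
def farPoints {X : Type*} [NormedAddCommGroup X] (K : Set X) : Set X :=
  ⋃ x ∈ DFar K, QFar K x

/-- The crescent `C(K, x, α) = {z ∈ K : ‖z - x‖ > r_K(x) - α}`. -/
def crescent {X : Type*} [NormedAddCommGroup X] (K : Set X) (x : X) (α : ℝ) : Set X :=
  {z ∈ K | rFar K x - α < ‖z - x‖}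

/-- Property (R): every crescent of `K` contains a farthest point of `K`. -/
def PropR {X : Type*} [NormedAddCommGroup X] (K : Set X) : Prop :=
  ∀ (x : X) (α : ℝ), 0 < α → ∃ z ∈ crescent K x α, z ∈ farPoints K

/-- A set is admissible if it is the intersection of all closed balls containing it. -/
def Admissible {X : Type*} [NormedAddCommGroup X] (K : Set X) : Prop :=
  K = ⋂ p ∈ {p : X × ℝ | K ⊆ closedBall p.1 p.2}, closedBall p.1 p.2

/-!
If `g` is a subgradient of `r_K` at `x`, then `g` has norm at most one, so any `w ∈ K` with
`g (x - w) ≥ r_K(x)` is a farthest point from `x`. The points `y` at which `r_K` decreases almost at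
the maximal rate towards some point of `K` form an open dense set, since one can start at any `y₀`
and move slightly away from an almost farthest point of `K`. By Baire's theorem, for generic `x` the
supremum of `g (x - z)` over `z ∈ K` is at least `r_K(x)`, and weak compactness of `K` makes it
attained. Hence `D(K)` is dense, and every ball containing `b(K)` contains `K`.

Conversely, thicken `K` to `S` and let `L` be the closed convex hull of `S` and a point `x₀` which
a functional `f` separates from `S`. If `x₀` were not a farthest point of `L`, then `f` would
separate it from all of them. So `x₀` is farthest in `L` from some `x`, and the
ball about `x` which contains `K` and is smaller by the size of the thickening misses `x₀`.
-/

section Convexity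

lemma exists_subgradient_of_convexOn {E : Type*} [AddCommGroup E] [TopologicalSpace E]
    [IsTopologicalAddGroup E] [Module ℝ E] [ContinuousSMul ℝ E] {f : E → ℝ}
    (hf : ConvexOn ℝ univ f) (hcont : Continuous f) (x : E) :
    ∃ g : StrongDual ℝ E, ∀ y, g (y - x) ≤ f y - f x := by
  have hconvex : Convex ℝ {p : E × ℝ | f p.1 < p.2} := by
    simpa only [mem_univ, true_and] using hf.convex_strict_epigraph
  have hopen : IsOpen {p : E × ℝ | f p.1 < p.2} :=
    isOpen_lt (hcont.comp continuous_fst) continuous_snd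
  obtain ⟨F, hF⟩ := geometric_hahn_banach_open_point (x := (x, f x)) hconvex hopen
    (lt_irrefl (f x))
  set h : StrongDual ℝ E := F.comp (ContinuousLinearMap.inl ℝ E ℝ)
  set c : ℝ := F (0, 1)
  have hF_apply (y : E) (t : ℝ) : F (y, t) = h y + t * c := by
    rw [← smul_eq_mul, ← map_smul, ContinuousLinearMap.comp_apply, ← map_add]
    simp
  have hseparated {y : E} {t : ℝ} (ht : f y < t) : h y + t * c < h x + f x * c := by
    simpa only [hF_apply] using hF (y, t) ht
  have hc : c < 0 := by linarith [hseparated (lt_add_one (f x))]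
  refine ⟨(-c)⁻¹ • h, fun y => ?_⟩
  rw [le_sub_iff_add_le]
  refine le_of_forall_gt_imp_ge_of_dense fun t ht => ?_
  rw [← le_sub_iff_add_le, smul_apply, smul_eq_mul,
    inv_mul_le_iff₀ (neg_pos.2 hc), map_sub]
  linarith [hseparated ht]

section Seminormed

variable {X : Type*} [SeminormedAddCommGroup X] [NormedSpace ℝ X]

lemma isBounded_closedConvexHull {S : Set X} (hb : Bornology.IsBounded S) :
    Bornology.IsBounded (closedConvexHull ℝ S) := by
  rw [closedConvexHull_eq_closure_convexHull]
  exact (isBounded_convexHull.2 hb).closure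

lemma le_of_mem_closedConvexHull_insert_of_le_dist {S : Set X} {f : StrongDual ℝ X} {u R : ℝ}
    {x x₀ z : X} (hfS : ∀ k ∈ S, f k ≤ u) (hS : S ⊆ closedBall x R) (hfx₀ : u ≤ f x₀)
    (hx₀ : dist x₀ x < R) (hz : z ∈ closedConvexHull ℝ (insert x₀ S)) (hzR : R ≤ dist z x) :
    f z ≤ u := by
  have hxR : 0 ≤ R - dist x₀ x := sub_nonneg.2 hx₀.le
  have hfu : 0 ≤ f x₀ - u := sub_nonneg.2 hfx₀
  -- The weights make the bound on the hull an equality at `x₀`.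
  let φ : X → ℝ := fun y => (R - dist x₀ x) * f y + (f x₀ - u) * dist y x
  have hφ_convex : ConvexOn ℝ univ φ :=
    ((f : X →ₗ[ℝ] ℝ).convexOn convex_univ |>.smul hxR).add
      ((convexOn_univ_dist x).smul hfu)
  have hφ_closed : IsClosed {y | φ y ≤ R * f x₀ - u * dist x₀ x} :=
    isClosed_le (by fun_prop) continuous_const
  have hφ_hull : closedConvexHull ℝ (insert x₀ S) ⊆ {y | φ y ≤ R * f x₀ - u * dist x₀ x} := by
    refine closedConvexHull_min (insert_subset ?_ fun k hk => ?_)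
      (by simpa only [mem_univ, true_and] using hφ_convex.convex_le _) hφ_closed
    · simp only [φ, mem_ofPred_eq]
      linarith
    · calc
        φ k ≤ (R - dist x₀ x) * u + (f x₀ - u) * R :=
          add_le_add (mul_le_mul_of_nonneg_left (hfS k hk) hxR)
            (mul_le_mul_of_nonneg_left (hS hk) hfu)
        _ = R * f x₀ - u * dist x₀ x := by ring
  have hz_le : φ z ≤ R * f x₀ - u * dist x₀ x := hφ_hull hz
  have hz_dist := mul_le_mul_of_nonneg_left hzR hfu
  refine le_of_mul_le_mul_left ?_ (sub_pos.2 hx₀)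
  simp only [φ] at hz_le
  linarith

end Seminormed

variable {X : Type*} [NormedAddCommGroup X] [NormedSpace ℝ X]

lemma dist_add_le_of_closedBall_subset_closedBall [Nontrivial X] {x k : X} {ε R : ℝ} (hε : 0 ≤ ε)
    (h : closedBall k ε ⊆ closedBall x R) : dist k x + ε ≤ R := by
  obtain ⟨v, hv, hvx⟩ : ∃ v : X, ‖v‖ = ε ∧ ‖k - x + v‖ = ‖k - x‖ + ε := by
    by_cases hkx : k = x
    · obtain ⟨v, hv⟩ := NormedSpace.sphere_nonempty (x := (0 : X)).2 hε
      have hv : ‖v‖ = ε := mem_sphere_zero_iff_norm.1 hv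
      exact ⟨v, hv, by simp [hkx, hv]⟩
    · have hpos : 0 < ‖k - x‖ := norm_sub_pos_iff.2 hkx
      have hv : ‖(ε / ‖k - x‖) • (k - x)‖ = ε := by
        rw [norm_smul, Real.norm_of_nonneg (by positivity), div_mul_cancel₀ _ hpos.ne']
      refine ⟨_, hv, ?_⟩
      rw [(SameRay.sameRay_nonneg_smul_right (k - x) (by positivity)).norm_add, hv]
  have hmem : k + v ∈ closedBall k ε := by simp [hv]
  rw [dist_eq_norm, ← hvx, sub_add_eq_add_sub, ← dist_eq_norm]
  exact h hmem

lemma subset_closedBall_sub_of_cthickening_subset [Nontrivial X] {K : Set X} {x : X} {ε R : ℝ}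
    (hε : 0 ≤ ε) (h : cthickening ε K ⊆ closedBall x R) : K ⊆ closedBall x (R - ε) := by
  intro k hk
  rw [mem_closedBall, le_sub_iff_add_le]
  exact dist_add_le_of_closedBall_subset_closedBall hε
    ((closedBall_subset_cthickening hk ε).trans h)

lemma isCompact_toWeakSpace_image {K : Set X}
    (hrefl : Function.Surjective (NormedSpace.inclusionInDoubleDual ℝ X)) (hc : IsClosed K)
    (hb : Bornology.IsBounded K) (hcv : Convex ℝ K) : IsCompact (toWeakSpace ℝ X '' K) := by
  have hclosure : closure (toWeakSpace ℝ X '' K) = toWeakSpace ℝ X '' K := by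
    rw [← hcv.toWeakSpace_closure ℝ, hc.closure_eq]
  have hsurj : Function.Surjective (NormedSpace.inclusionInDoubleDualWeak ℝ X) := hrefl
  rw [← hclosure]
  refine NormedSpace.isCompact_closure_of_isBounded ℝ X _ ?_ ?_
  · rwa [preimage_image_eq _ (toWeakSpace ℝ X).injective]
  · exact hsurj.range_eq ▸ subset_univ _

end Convexity

section FarthestDistance

variable {X : Type*} [NormedAddCommGroup X] {K : Set X}

lemma rFar_le_iff_subset_closedBall (hne : K.Nonempty) (hb : Bornology.IsBounded K) {x : X}
    {R : ℝ} : rFar K x ≤ R ↔ K ⊆ closedBall x R := by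
  have hbdd : BddAbove ((fun z => ‖z - x‖) '' K) := by
    obtain ⟨C, hC⟩ := hb.subset_closedBall x
    refine ⟨C, forall_mem_image.2 fun z hz => ?_⟩
    simpa only [mem_closedBall, dist_eq_norm] using hC hz
  simp only [rFar, csSup_le_iff hbdd (hne.image _), forall_mem_image, subset_def, mem_closedBall,
    dist_eq_norm]

lemma dist_le_rFar (hb : Bornology.IsBounded K) {x z : X} (hz : z ∈ K) : dist z x ≤ rFar K x :=
  (rFar_le_iff_subset_closedBall ⟨z, hz⟩ hb).1 le_rfl hz

lemma exists_lt_dist_of_lt_rFar (hne : K.Nonempty) (hb : Bornology.IsBounded K) {x : X} {R : ℝ}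
    (hR : R < rFar K x) : ∃ z ∈ K, R < dist z x := by
  simpa only [rFar_le_iff_subset_closedBall hne hb, not_subset, mem_closedBall, not_le]
    using hR.not_ge

lemma lipschitzWith_rFar (hne : K.Nonempty) (hb : Bornology.IsBounded K) :
    LipschitzWith 1 (rFar K) := by
  refine LipschitzWith.of_le_add fun x y => (rFar_le_iff_subset_closedBall hne hb).2 fun z hz => ?_
  calc
    dist z x ≤ dist z y + dist y x := dist_triangle z y x
    _ ≤ rFar K y + dist x y := by grw [dist_le_rFar hb hz, dist_comm y x]

lemma convexOn_rFar [NormedSpace ℝ X] (hne : K.Nonempty) (hb : Bornology.IsBounded K) :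
    ConvexOn ℝ univ (rFar K) := by
  refine ⟨convex_univ, fun x _ y _ a b ha hb' hab =>
    (rFar_le_iff_subset_closedBall hne hb).2 fun z hz => ?_⟩
  calc
    dist z (a • x + b • y) ≤ a • dist z x + b • dist z y := by
      simpa only [dist_comm z] using (convexOn_univ_dist z).2 (mem_univ x) (mem_univ y) ha hb' hab
    _ ≤ a • rFar K x + b • rFar K y := by
      gcongr <;> exact dist_le_rFar hb hz

lemma mem_DFar {x : X} : x ∈ DFar K ↔ ∃ z ∈ K, dist z x = rFar K x := by
  simp only [DFar, QFar, Set.Nonempty, mem_ofPred_eq, dist_eq_norm]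

lemma mem_farPoints {z : X} : z ∈ farPoints K ↔ z ∈ K ∧ ∃ x, dist z x = rFar K x := by
  simp only [farPoints, QFar, mem_iUnion, mem_ofPred_eq, mem_DFar, dist_eq_norm, exists_prop]
  grind

lemma subset_closedBall_of_farPoints_subset (hD : Dense (DFar K)) (hb : Bornology.IsBounded K)
    {x : X} {R : ℝ} (h : farPoints K ⊆ closedBall x R) : K ⊆ closedBall x R := by
  intro p hp
  have hne : K.Nonempty := ⟨p, hp⟩
  have hle_on_DFar : ∀ y ∈ DFar K, rFar K y ≤ R + dist y x := by
    intro y hy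
    obtain ⟨z, hz, hzy⟩ := mem_DFar.1 hy
    have hzR := mem_closedBall.1 (h (mem_farPoints.2 ⟨hz, y, hzy⟩))
    grw [← hzy, dist_triangle_right z y x, hzR]
  have hclosed : IsClosed {y | rFar K y ≤ R + dist y x} :=
    isClosed_le (lipschitzWith_rFar hne hb).continuous (by fun_prop)
  have hx : rFar K x ≤ R + dist x x := closure_minimal hle_on_DFar hclosed (hD x)
  rw [dist_self, add_zero] at hx
  exact (rFar_le_iff_subset_closedBall hne hb).1 hx hp

lemma farPoints_subset : farPoints K ⊆ K := fun _ hz => (mem_farPoints.1 hz).1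

lemma admissible_iff :
    Admissible K ↔ ∀ p, (∀ x R, K ⊆ closedBall x R → p ∈ closedBall x R) → p ∈ K := by
  have hsub : K ⊆ ⋂ p ∈ {p : X × ℝ | K ⊆ closedBall p.1 p.2}, closedBall p.1 p.2 :=
    subset_iInter₂ fun _ hp => hp
  rw [Admissible, Subset.antisymm_iff, and_iff_right hsub, subset_def]
  simp only [mem_iInter, mem_ofPred_eq, Prod.forall]

end FarthestDistance

section Lau

variable {X : Type*} [NormedAddCommGroup X] [NormedSpace ℝ X] {K : Set X}

/-- The points `y` from which moving some fraction `l` of the way towards a point of `K` multiplies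
`r_K` by at most `1 - l`, up to an error `l * η`. This forces every subgradient `g` of `r_K` at `y`
to satisfy `r_K(y) - η < g (y - z)` for some `z ∈ K`, and unlike the latter it is visibly an open
condition. -/
def steepPoints (K : Set X) (η : ℝ) : Set X :=
  {y | ∃ z ∈ K, ∃ l > 0, rFar K (AffineMap.lineMap y z l) < (1 - l) * rFar K y + l * η}

lemma isOpen_steepPoints (hne : K.Nonempty) (hb : Bornology.IsBounded K) (η : ℝ) :
    IsOpen (steepPoints K η) := by
  have hr : Continuous (rFar K) := (lipschitzWith_rFar hne hb).continuous
  have heq : steepPoints K η = ⋃ z ∈ K, ⋃ l > 0,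
      {y | rFar K (AffineMap.lineMap y z l) < (1 - l) * rFar K y + l * η} := by
    ext y
    simp only [steepPoints, mem_iUnion, mem_ofPred_eq, exists_prop]
  rw [heq]
  exact isOpen_biUnion fun z _ => isOpen_biUnion fun l _ => isOpen_lt (by fun_prop) (by fun_prop)

lemma dense_steepPoints (hne : K.Nonempty) (hb : Bornology.IsBounded K) {η : ℝ} (hη : 0 < η) :
    Dense (steepPoints K η) := by
  refine Metric.dense_iff.2 fun y₀ δ hδ => ?_
  obtain ⟨s, hs, hsδ⟩ := exists_pos_mul_lt hδ (rFar K y₀)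
  obtain ⟨z, hz, hzfar⟩ := exists_lt_dist_of_lt_rFar hne hb (x := y₀)
    (R := rFar K y₀ - s * η / (1 + s)) (sub_lt_self _ (by positivity))
  set y : X := AffineMap.lineMap y₀ z (-s) with hy
  have hy_near : dist y y₀ < δ := by
    rw [hy, dist_lineMap_left, norm_neg, Real.norm_of_nonneg hs.le, dist_comm, mul_comm]
    exact (mul_le_mul_of_nonneg_right (dist_le_rFar hb hz) hs.le).trans_lt hsδ
  have hy_back : AffineMap.lineMap y z (s / (1 + s)) = y₀ := by
    have : 1 - (1 - s / (1 + s)) * (1 - -s) = 0 := by field_simp; ring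
    rw [hy, AffineMap.lineMap_lineMap_left, this, AffineMap.lineMap_apply_zero]
  have hy_far : (1 + s) * dist z y₀ ≤ rFar K y := by
    have : dist z y = (1 + s) * dist z y₀ := by
      rw [hy, dist_right_lineMap, sub_neg_eq_add, Real.norm_of_nonneg (by positivity), dist_comm y₀]
    exact this ▸ dist_le_rFar hb hz
  refine ⟨y, hy_near, z, hz, s / (1 + s), by positivity, ?_⟩
  rw [hy_back]
  calc
    rFar K y₀ < dist z y₀ + s * η / (1 + s) := by linarith
    _ ≤ rFar K y / (1 + s) + s * η / (1 + s) := by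
      gcongr
      rwa [le_div_iff₀' (by positivity)]
    _ = (1 - s / (1 + s)) * rFar K y + s / (1 + s) * η := by field_simp; ring

lemma mem_DFar_of_forall_mem_steepPoints (hb : Bornology.IsBounded K)
    (hK : IsCompact (toWeakSpace ℝ X '' K)) {x : X} (hx : ∀ η > 0, x ∈ steepPoints K η) :
    x ∈ DFar K := by
  have hne : K.Nonempty := let ⟨z, hz, _⟩ := hx 1 one_pos; ⟨z, hz⟩
  have hlip := lipschitzWith_rFar hne hb
  obtain ⟨g, hg⟩ := exists_subgradient_of_convexOn (convexOn_rFar hne hb) hlip.continuous x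
  have hg_le (v : X) : g v ≤ ‖v‖ := by
    have hgv := hg (x + v)
    have hrv := hlip.le_add_mul (x + v) x
    rw [add_sub_cancel_left] at hgv
    rw [dist_self_add_left, NNReal.coe_one, one_mul] at hrv
    linarith
  obtain ⟨w, hw, hw_min⟩ : ∃ w ∈ K, ∀ z ∈ K, g w ≤ g z := by
    obtain ⟨_, ⟨w, hw, rfl⟩, hw_min⟩ := hK.exists_isMinOn (hne.image _)
      (WeakBilin.eval_continuous (topDualPairing ℝ X).flip g).continuousOn
    exact ⟨w, hw, fun z hz => hw_min (mem_image_of_mem _ hz)⟩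
  refine mem_DFar.2 ⟨w, hw, (dist_le_rFar hb hw).antisymm (le_of_forall_pos_le_add fun η hη => ?_)⟩
  obtain ⟨z, hz, l, hl, hsteep⟩ := hx η hη
  have hz_steep : g (z - x) < η - rFar K x := by
    have hg_line := hg (AffineMap.lineMap x z l)
    rw [AffineMap.lineMap_apply_module', add_sub_cancel_right, map_smul, smul_eq_mul,
      ← AffineMap.lineMap_apply_module'] at hg_line
    refine lt_of_mul_lt_mul_left ?_ hl.le
    linarith
  have hw_norm : g (x - w) ≤ dist w x := by
    rw [dist_comm, dist_eq_norm]
    exact hg_le _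
  rw [map_sub] at hz_steep hw_norm
  linarith [hw_min z hz]

/-- **Lau's theorem**. -/
lemma dense_DFar [CompleteSpace X] (hne : K.Nonempty) (hb : Bornology.IsBounded K)
    (hK : IsCompact (toWeakSpace ℝ X '' K)) : Dense (DFar K) := by
  have hpos (n : ℕ) : (0 : ℝ) < 1 / (n + 1) := Nat.one_div_pos_of_nat
  refine (dense_iInter_of_isOpen_nat (fun n => isOpen_steepPoints hne hb (1 / (n + 1)))
    fun n => dense_steepPoints hne hb (hpos n)).mono fun x hx => ?_
  refine mem_DFar_of_forall_mem_steepPoints hb hK fun η hη => ?_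
  obtain ⟨n, hn⟩ := exists_nat_one_div_lt hη
  obtain ⟨z, hz, l, hl, hsteep⟩ := mem_iInter.1 hx n
  exact ⟨z, hz, l, hl, by grw [hsteep, hn]⟩

lemma eq_closedConvexHull_farPoints (hD : Dense (DFar K)) (hc : IsClosed K)
    (hb : Bornology.IsBounded K) (hcv : Convex ℝ K)
    (hadm : Admissible (closedConvexHull ℝ (farPoints K))) :
    K = closedConvexHull ℝ (farPoints K) := by
  refine Subset.antisymm (fun p hp => admissible_iff.1 hadm p fun x R hball => ?_) ?_
  · exact subset_closedBall_of_farPoints_subset hD hb (subset_closedConvexHull.trans hball) hp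
  · exact closedConvexHull_min farPoints_subset hcv hc

end Lau

section Converse

variable {X : Type*} [NormedAddCommGroup X] [NormedSpace ℝ X]

lemma mem_farPoints_closedConvexHull_insert {S : Set X} (hb : Bornology.IsBounded S)
    {f : StrongDual ℝ X} {u : ℝ} {x₀ : X} (hfS : ∀ k ∈ S, f k ≤ u) (hfx₀ : u < f x₀)
    (hL : closedConvexHull ℝ (insert x₀ S) =
      closedConvexHull ℝ (farPoints (closedConvexHull ℝ (insert x₀ S)))) :
    x₀ ∈ farPoints (closedConvexHull ℝ (insert x₀ S)) := by
  set L := closedConvexHull ℝ (insert x₀ S)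
  have hLb : Bornology.IsBounded L := isBounded_closedConvexHull (hb.insert x₀)
  have hsub : insert x₀ S ⊆ L := subset_closedConvexHull
  have hx₀L : x₀ ∈ L := hsub (mem_insert x₀ S)
  by_contra hx₀
  have hfar : farPoints L ⊆ {y | f y ≤ u} := by
    intro z hz
    obtain ⟨hzL, x, hzx⟩ := mem_farPoints.1 hz
    have hlt : dist x₀ x < rFar L x :=
      (dist_le_rFar hLb hx₀L).lt_of_ne fun heq => hx₀ (mem_farPoints.2 ⟨hx₀L, x, heq⟩)
    exact le_of_mem_closedConvexHull_insert_of_le_dist hfS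
      (fun k hk => dist_le_rFar hLb (hsub (mem_insert_of_mem x₀ hk))) hfx₀.le hlt hzL hzx.ge
  have hhalf : closedConvexHull ℝ (farPoints L) ⊆ {y | f y ≤ u} :=
    closedConvexHull_min hfar (convex_halfSpace_le f.isLinear u)
      (isClosed_le f.continuous continuous_const)
  exact (hhalf (hL.subset hx₀L)).not_gt hfx₀

lemma admissible_of_forall_eq_closedConvexHull_farPoints
    (H : ∀ L : Set X, L.Nonempty → IsClosed L → Bornology.IsBounded L → Convex ℝ L →
      L = closedConvexHull ℝ (farPoints L))
    {K : Set X} (hc : IsClosed K) (hb : Bornology.IsBounded K) (hcv : Convex ℝ K) :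
    Admissible K := by
  refine admissible_iff.2 fun x₀ hballs => ?_
  by_contra hx₀K
  obtain ⟨k, hk⟩ : K.Nonempty := by
    by_contra! hempty
    simpa using hballs x₀ (-1) (by simp [hempty])
  have : Nontrivial X := ⟨x₀, k, fun h => hx₀K (h ▸ hk)⟩
  obtain ⟨ε, hε, hx₀⟩ : ∃ ε > 0, x₀ ∉ cthickening ε K := by
    rw [← hc.closure_eq, closure_eq_iInter_cthickening] at hx₀K
    simpa only [mem_iInter, not_forall, exists_prop] using hx₀K
  obtain ⟨f, u, hfS, hfx₀⟩ :=
    geometric_hahn_banach_closed_point (hcv.cthickening ε) isClosed_cthickening hx₀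
  set L := closedConvexHull ℝ (insert x₀ (cthickening ε K))
  have hsub : insert x₀ (cthickening ε K) ⊆ L := subset_closedConvexHull
  have hLb : Bornology.IsBounded L := isBounded_closedConvexHull (hb.cthickening.insert x₀)
  obtain ⟨-, x, hx⟩ := mem_farPoints.1 <|
    mem_farPoints_closedConvexHull_insert hb.cthickening (fun k hk => (hfS k hk).le) hfx₀ <|
      H L ⟨x₀, hsub (mem_insert x₀ _)⟩ isClosed_closedConvexHull hLb convex_closedConvexHull
  have hball : K ⊆ closedBall x (dist x₀ x - ε) :=
    subset_closedBall_sub_of_cthickening_subset hε.le fun y hy =>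
      hx ▸ dist_le_rFar hLb (hsub (mem_insert_of_mem x₀ hy))
  linarith [mem_closedBall.1 (hballs x _ hball)]

end Converse

/-- Corollary far1 (Lau): a reflexive Banach space has the MIP iff every nonempty closed
bounded convex set is the closed convex hull of its farthest points. -/
theorem stmt_9 {X : Type*} [NormedAddCommGroup X] [NormedSpace ℝ X] [CompleteSpace X]
    (hrefl : Function.Surjective (NormedSpace.inclusionInDoubleDual ℝ X)) :
    (∀ K : Set X, IsClosed K → Bornology.IsBounded K → Convex ℝ K → Admissible K) ↔
    (∀ K : Set X, K.Nonempty → IsClosed K → Bornology.IsBounded K → Convex ℝ K →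
      K = closure (convexHull ℝ (farPoints K))) := by
  simp only [← closedConvexHull_eq_closure_convexHull]
  constructor
  · intro hMIP K hne hc hb hcv
    have hD : Dense (DFar K) := dense_DFar hne hb (isCompact_toWeakSpace_image hrefl hc hb hcv)
    have hhull := isBounded_closedConvexHull (hb.subset (farPoints_subset (K := K)))
    exact eq_closedConvexHull_farPoints hD hc hb hcv
      (hMIP _ isClosed_closedConvexHull hhull convex_closedConvexHull)
  · intro hfar K hc hb hcv
    exact admissible_of_forall_eq_closedConvexHull_farPoints hfar hc hb hcv
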